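/- arXiv:2605.12316 — 4 statements merged into one kernel-verified Lean document; each statement's English description precedes it below -/
import Mathlib

section
/- Theorem 4.2 (information-theoretic estimation lower bound under joint KL). There exist absolute constants c, c_0 > 0 such that for every integer K ≥ 4, every n ≥ c_0·log K, every horizon H ∈ ℕ, and every G ∈ (0,1], one can construct a finite sample space S, a base class Π_0 of K probability distributions on S (single-step, history-independent models) whose pairwise log-density ratios are bounded in absolute value by G, and the induced decomposable class Π = Π_0^H of product distributions P^θ = ⊗_{h=1}^H P_{θ_h} on S^H, such that every proper selector π̂ = π̂(S_1,…,S_n) ∈ Π based on n i.i.d. trajectories S_1,…,S_n ∼ P^{π*} satisfies inf_{π̂∈Π} sup_{π*∈Π} E_{S_{1:n} ∼ (P^{π*})^{⊗n}}[ KL(P^{π*} ‖ P^{π̂}) ] ≥ c · H · G^2 · (log K) / n. -/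
/-! The bound is Assouad's method with a hypercube family, so no packing of the cube is needed.

Let `m = ⌊log₂ K⌋`. A bit vector `b` of length `m` gives the distribution `cube m ε b` on
`Fin m × Bool`: a uniform position `j`, then a bit that equals `b j` with probability `(1 + ε) / 2`.
Two such distributions have log-ratios at most `4 ε` (`cube_log_le`), divergence at least
`ε² / m` times the Hamming distance (`cube_kl`), and, when they differ in a single bit,
Bhattacharyya coefficient at least `1 - ε² / m` (`cube_bc`).

With `ε² = G² m / (16 n)`, the laws of the whole data set for two bit arrays in `{0,1}^(H × m)`
that differ in one bit have Bhattacharyya coefficient at least `15/16`, hence affinity at least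
`1/4` by Le Cam's inequality (`sum_min_flip`). Averaging over a uniform bit array, every one of
the `H m` bits is wrong with probability at least `1/8` (`bit_error`). The divergence is additive
over the `H` steps (`kl_prod`), so the average risk is at least
`H m (ε² / m) / 8 = H G² m / (128 n)` (`assouad`), and `m ≥ log K / 2`. -/

open Finset

/-- KL divergence between two densities on a finite type. -/
noncomputable def kl {α : Type*} [Fintype α] (P Q : α → ℝ) : ℝ :=
  ∑ x, P x * Real.log (P x / Q x)

/-! ### Product structure -/

lemma sum_prod_prod {n H : ℕ} {S : Type*} [Fintype S] (f : Fin H → S → ℝ) :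
    ∑ data : Fin n → Fin H → S, ∏ i, ∏ h, f h (data i h) = (∏ h, ∑ s, f h s) ^ n := by
  classical
  have h1 := Fintype.prod_sum (fun (_ : Fin n) (u : Fin H → S) => ∏ h, f h (u h))
  rw [← h1, Finset.prod_const, Finset.card_univ, Fintype.card_fin, Fintype.prod_sum]

/-- Tensorization of the Kullback–Leibler divergence. -/
lemma kl_prod {H : ℕ} {S : Type*} [Fintype S] (P Q : Fin H → S → ℝ)
    (hP : ∀ h s, 0 < P h s) (hQ : ∀ h s, 0 < Q h s) (hP1 : ∀ h, ∑ s, P h s = 1) :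
    kl (fun u : Fin H → S => ∏ h, P h (u h)) (fun u => ∏ h, Q h (u h))
      = ∑ h, kl (P h) (Q h) := by
  classical
  unfold kl
  have e1 : ∀ u : Fin H → S, (∏ h, P h (u h)) *
      Real.log ((∏ h, P h (u h)) / ∏ h, Q h (u h)) =
      ∑ h', ∏ h, (if h = h' then P h (u h) * Real.log (P h (u h) / Q h (u h))
        else P h (u h)) := by
    intro u
    rw [← Finset.prod_div_distrib, Real.log_prod
      (fun h _ => (div_pos (hP h _) (hQ h _)).ne'), Finset.mul_sum]
    refine Finset.sum_congr rfl fun h' _ => ?_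
    rw [← Finset.mul_prod_erase univ (fun h => P h (u h)) (Finset.mem_univ h'),
      ← Finset.mul_prod_erase univ (fun h => if h = h' then
        P h (u h) * Real.log (P h (u h) / Q h (u h)) else P h (u h)) (Finset.mem_univ h')]
    rw [Finset.prod_congr (s₁ := univ.erase h') rfl
      (g := fun h => P h (u h)) (fun h hh => if_neg (Finset.ne_of_mem_erase hh))]
    simp only [if_true]
    ring
  simp_rw [e1]
  rw [Finset.sum_comm]
  refine Finset.sum_congr rfl fun h' _ => ?_
  have h2 := Fintype.prod_sum (fun (h : Fin H) (s : S) =>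
    if h = h' then P h s * Real.log (P h s / Q h s) else P h s)
  rw [← h2, Finset.prod_eq_single h']
  · simp
  · intro b _ hb
    simp [hb, hP1]
  · simp

/-! ### The two-point bound -/

/-- Le Cam's inequality: the affinity of two probability vectors is at least half the square of
their Bhattacharyya coefficient, here given through a pointwise geometric mean `r`. -/
lemma sq_sum_le_two_mul_sum_min {ι : Type*} [Fintype ι] (p q r : ι → ℝ)
    (hp : ∀ i, 0 ≤ p i) (hq : ∀ i, 0 ≤ q i) (hr : ∀ i, r i ^ 2 = p i * q i)
    (hp1 : ∑ i, p i = 1) (hq1 : ∑ i, q i = 1) :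
    (∑ i, r i) ^ 2 ≤ 2 * ∑ i, min (p i) (q i) := by
  have h1 : (∑ i, r i) ^ 2 ≤ (∑ i, min (p i) (q i)) * ∑ i, max (p i) (q i) := by
    refine Finset.sum_sq_le_sum_mul_sum_of_sq_le_mul _ (fun i _ => le_min (hp i) (hq i))
      (fun i _ => le_max_of_le_left (hp i)) (fun i _ => ?_)
    rw [hr, min_mul_max]
  have h2 : ∑ i, max (p i) (q i) ≤ 2 := by
    calc ∑ i, max (p i) (q i) ≤ ∑ i, (p i + q i) :=
          Finset.sum_le_sum fun i _ => max_le (by linarith [hq i]) (by linarith [hp i])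
      _ = 2 := by rw [Finset.sum_add_distrib, hp1, hq1]; norm_num
  have h3 : 0 ≤ ∑ i, min (p i) (q i) := Finset.sum_nonneg fun i _ => le_min (hp i) (hq i)
  nlinarith

/-! ### Assouad's argument over the `H * m` bits -/

/-- Negate the bit `(h, j)` of a bit array. -/
def flipBit {H m : ℕ} (h : Fin H) (j : Fin m) (v : Fin H → Fin m → Bool) :
    Fin H → Fin m → Bool :=
  fun a b => if a = h ∧ b = j then !(v a b) else v a b

lemma flipBit_involutive {H m : ℕ} (h : Fin H) (j : Fin m) :
    Function.Involutive (flipBit h j) := by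
  intro v
  funext a b
  unfold flipBit
  split_ifs <;> simp

/-- Affinity of the data laws of two bit arrays differing in one bit, when the single-step
Bhattacharyya coefficient across one bit is at least `1 - β` and `n * β ≤ 1/16`. -/
lemma sum_min_flip {n H m : ℕ} {S : Type*} [Fintype S] (Q : (Fin m → Bool) → S → ℝ)
    (hpos : ∀ b s, 0 < Q b s) (hsum : ∀ b, ∑ s, Q b s = 1) (β : ℝ) (hβ1 : β ≤ 1)
    (hnβ : n * β ≤ 1 / 16)
    (hBC : ∀ b b' : Fin m → Bool, ∀ j0, (∀ j, j ≠ j0 → b j = b' j) →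
      1 - β ≤ ∑ s, Real.sqrt (Q b s * Q b' s))
    (h : Fin H) (j : Fin m) (v : Fin H → Fin m → Bool) :
    1 / 4 ≤ ∑ data : Fin n → Fin H → S,
      min (∏ i, ∏ a, Q (v a) (data i a)) (∏ i, ∏ a, Q (flipBit h j v a) (data i a)) := by
  have key := sq_sum_le_two_mul_sum_min
    (fun data : Fin n → Fin H → S => ∏ i, ∏ a, Q (v a) (data i a))
    (fun data => ∏ i, ∏ a, Q (flipBit h j v a) (data i a))
    (fun data => ∏ i, ∏ a, Real.sqrt (Q (v a) (data i a) * Q (flipBit h j v a) (data i a)))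
    (fun data => Finset.prod_nonneg fun i _ => Finset.prod_nonneg fun a _ => (hpos _ _).le)
    (fun data => Finset.prod_nonneg fun i _ => Finset.prod_nonneg fun a _ => (hpos _ _).le)
    (fun data => by
      simp only [← Finset.prod_pow, ← Finset.prod_mul_distrib]
      refine Finset.prod_congr rfl fun i _ => Finset.prod_congr rfl fun a _ => ?_
      exact Real.sq_sqrt (mul_pos (hpos _ _) (hpos _ _)).le)
    (by rw [sum_prod_prod (fun a s => Q (v a) s)]; simp [hsum])
    (by rw [sum_prod_prod (fun a s => Q (flipBit h j v a) s)]; simp [hsum])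
  rw [sum_prod_prod (fun a s => Real.sqrt (Q (v a) s * Q (flipBit h j v a) s))] at key
  rw [Finset.prod_eq_single h ?_ (by simp)] at key
  · have h1 := hBC (v h) (flipBit h j v h) j (fun b hb => by simp [flipBit, hb])
    have h2 := pow_le_pow_left₀ (by linarith) h1 n
    have h3 := one_add_mul_le_pow (a := -β) (by linarith) n
    rw [← sub_eq_add_neg] at h3
    nlinarith
  · intro a _ ha
    have : flipBit h j v a = v a := by funext b; simp [flipBit, ha]
    rw [this]
    simp only [Real.sqrt_mul_self (hpos _ _).le, hsum]

/-- Averaged over all bit arrays, any estimator `w` of the bit `(h, j)` errs with probability at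
least `1/8`. -/
lemma bit_error {n H m : ℕ} {S : Type*} [Fintype S] (Q : (Fin m → Bool) → S → ℝ)
    (hpos : ∀ b s, 0 < Q b s) (hsum : ∀ b, ∑ s, Q b s = 1) (β : ℝ) (hβ1 : β ≤ 1)
    (hnβ : n * β ≤ 1 / 16)
    (hBC : ∀ b b' : Fin m → Bool, ∀ j0, (∀ j, j ≠ j0 → b j = b' j) →
      1 - β ≤ ∑ s, Real.sqrt (Q b s * Q b' s))
    (h : Fin H) (j : Fin m) (w : (Fin n → Fin H → S) → Bool) :
    ∑ _v : Fin H → Fin m → Bool, (1 / 8 : ℝ) ≤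
      ∑ v : Fin H → Fin m → Bool, ∑ data : Fin n → Fin H → S,
        (∏ i, ∏ a, Q (v a) (data i a)) * (if v h j = w data then 0 else 1) := by
  set F : (Fin H → Fin m → Bool) → ℝ := fun v => ∑ data : Fin n → Fin H → S,
        (∏ i, ∏ a, Q (v a) (data i a)) * (if v h j = w data then 0 else 1) with hF
  have hflip : ∑ v, F (flipBit h j v) = ∑ v, F v :=
    Equiv.sum_comp (flipBit_involutive h j).toPerm F
  have hpt : ∀ v, (1 / 4 : ℝ) ≤ F v + F (flipBit h j v) := by
    intro v
    refine (sum_min_flip (n := n) Q hpos hsum β hβ1 hnβ hBC h j v).trans ?_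
    rw [hF, ← Finset.sum_add_distrib]
    refine Finset.sum_le_sum fun data _ => ?_
    have hv : flipBit h j v h j = !(v h j) := by simp [flipBit]
    rw [hv]
    cases v h j <;> cases w data <;> simp
  have h4 := Finset.sum_le_sum fun v (_ : v ∈ univ) => hpt v
  rw [Finset.sum_add_distrib, hflip] at h4
  have h5 : ∑ _v : Fin H → Fin m → Bool, (1 / 4 : ℝ)
      = 2 * ∑ _v : Fin H → Fin m → Bool, (1 / 8 : ℝ) := by
    rw [Finset.mul_sum]; norm_num
  linarith

/-- Assouad's lemma for the product class: if the single-step divergence is at least `α` times the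
Hamming distance of the bit labels, some bit array forces risk `α * H * m / 8`. -/
lemma assouad {n H m : ℕ} {S : Type*} [Fintype S] (Q : (Fin m → Bool) → S → ℝ)
    (hpos : ∀ b s, 0 < Q b s) (hsum : ∀ b, ∑ s, Q b s = 1) (α β : ℝ) (hα : 0 ≤ α) (hβ1 : β ≤ 1)
    (hnβ : n * β ≤ 1 / 16)
    (hBC : ∀ b b' : Fin m → Bool, ∀ j0, (∀ j, j ≠ j0 → b j = b' j) →
      1 - β ≤ ∑ s, Real.sqrt (Q b s * Q b' s))
    (hKL : ∀ b b', α * ∑ j, (if b j = b' j then 0 else 1) ≤ kl (Q b) (Q b'))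
    (sel : (Fin n → Fin H → S) → Fin H → Fin m → Bool) :
    ∃ v : Fin H → Fin m → Bool, α * H * m / 8 ≤
      ∑ data : Fin n → Fin H → S, (∏ i, ∏ h, Q (v h) (data i h)) *
        kl (fun u : Fin H → S => ∏ h, Q (v h) (u h))
          (fun u : Fin H → S => ∏ h, Q (sel data h) (u h)) := by
  have hsumle : ∑ _v : Fin H → Fin m → Bool, α * H * m / 8 ≤
      ∑ v : Fin H → Fin m → Bool,
      ∑ data : Fin n → Fin H → S, (∏ i, ∏ h, Q (v h) (data i h)) *
        kl (fun u : Fin H → S => ∏ h, Q (v h) (u h))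
          (fun u : Fin H → S => ∏ h, Q (sel data h) (u h)) := by
    calc ∑ _v : Fin H → Fin m → Bool, α * H * m / 8
        = α * ∑ _h : Fin H, ∑ _j : Fin m, ∑ _v : Fin H → Fin m → Bool, (1 / 8 : ℝ) := by
          simp only [Finset.sum_const, Finset.card_univ, nsmul_eq_mul, Fintype.card_fin]
          ring
      _ ≤ α * ∑ h : Fin H, ∑ j : Fin m, ∑ v : Fin H → Fin m → Bool,
            ∑ data : Fin n → Fin H → S,
            (∏ i, ∏ a, Q (v a) (data i a)) * (if v h j = sel data h j then 0 else 1) := by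
          refine mul_le_mul_of_nonneg_left ?_ hα
          exact Finset.sum_le_sum fun h _ => Finset.sum_le_sum fun j _ =>
            bit_error Q hpos hsum β hβ1 hnβ hBC h j (fun data => sel data h j)
      _ = ∑ v : Fin H → Fin m → Bool, ∑ data : Fin n → Fin H → S,
            (∏ i, ∏ a, Q (v a) (data i a)) *
              ∑ h : Fin H, α * ∑ j : Fin m, (if v h j = sel data h j then 0 else 1) := by
          simp only [Finset.mul_sum]
          simp only [Finset.sum_comm (s := (univ : Finset (Fin m)))
            (t := (univ : Finset (Fin H → Fin m → Bool)))]
          rw [Finset.sum_comm]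
          refine Finset.sum_congr rfl fun v _ => ?_
          simp only [Finset.sum_comm (s := (univ : Finset (Fin m)))
            (t := (univ : Finset (Fin n → Fin H → S)))]
          rw [Finset.sum_comm]
          refine Finset.sum_congr rfl fun data _ => Finset.sum_congr rfl fun h _ =>
            Finset.sum_congr rfl fun j _ => ?_
          ring
      _ ≤ _ := by
          refine Finset.sum_le_sum fun v _ => Finset.sum_le_sum fun data _ => ?_
          refine mul_le_mul_of_nonneg_left ?_ (Finset.prod_nonneg fun i _ =>
            Finset.prod_nonneg fun a _ => (hpos _ _).le)
          rw [kl_prod (fun h => Q (v h)) (fun h => Q (sel data h)) (fun h s => hpos _ _)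
            (fun h s => hpos _ _) (fun h => hsum _)]
          exact Finset.sum_le_sum fun h _ => hKL _ _
  obtain ⟨v, -, hv⟩ := Finset.exists_le_of_sum_le Finset.univ_nonempty hsumle
  exact ⟨v, hv⟩

/-! ### The base class -/

/-- The hypercube family: draw `j` uniformly from `Fin m`, then a bit which agrees with `b j` with
probability `(1 + ε) / 2`. -/
noncomputable def cube (m : ℕ) (ε : ℝ) (b : Fin m → Bool) (x : Fin m × Bool) : ℝ :=
  (1 + if b x.1 = x.2 then ε else -ε) / (2 * m)

lemma cube_pos {m : ℕ} (hm : 0 < m) {ε : ℝ} (h0 : 0 < ε) (h1 : ε ≤ 1 / 4)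
    (b : Fin m → Bool) (x : Fin m × Bool) : 0 < cube m ε b x := by
  unfold cube
  have : (0 : ℝ) < m := by exact_mod_cast hm
  apply div_pos _ (by positivity)
  split_ifs <;> linarith

lemma cube_sum {m : ℕ} (hm : 0 < m) (ε : ℝ) (b : Fin m → Bool) :
    ∑ x, cube m ε b x = 1 := by
  have hm' : (m : ℝ) ≠ 0 := by exact_mod_cast hm.ne'
  rw [Fintype.sum_prod_type]
  have : ∀ j, ∑ s, cube m ε b (j, s) = 1 / m := by
    intro j
    rw [Fintype.sum_bool]
    unfold cube
    cases b j <;> simp <;> field_simp <;> ring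
  simp only [this]
  simp [hm']

/-- The log-odds `log ((1 + ε) / (1 - ε))` lie between `ε` and `4 ε`. -/
lemma log_odds {ε : ℝ} (h0 : 0 < ε) (h1 : ε ≤ 1 / 4) :
    ε ≤ Real.log ((1 + ε) / (1 - ε)) ∧ Real.log ((1 + ε) / (1 - ε)) ≤ 4 * ε := by
  have hp : 0 < (1 + ε) / (1 - ε) := div_pos (by linarith) (by linarith)
  constructor
  · refine le_trans ?_ (Real.one_sub_inv_le_log_of_pos hp)
    rw [inv_div, le_sub_iff_add_le, ← le_sub_iff_add_le', div_le_iff₀ (by linarith)]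
    nlinarith
  · refine (Real.log_le_sub_one_of_pos hp).trans ?_
    rw [sub_le_iff_le_add, div_le_iff₀ (by linarith)]
    nlinarith

lemma cube_log_ratio {m : ℕ} (hm : 0 < m) {ε : ℝ} (b b' : Fin m → Bool) (x : Fin m × Bool) :
    Real.log (cube m ε b x / cube m ε b' x) =
      if b x.1 = b' x.1 then 0 else
        if b x.1 = x.2 then Real.log ((1 + ε) / (1 - ε)) else
          -Real.log ((1 + ε) / (1 - ε)) := by
  have hm' : (2 * m : ℝ) ≠ 0 := by positivity
  unfold cube
  rw [div_div_div_cancel_right₀ hm', ← Real.log_inv, inv_div]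
  rcases x with ⟨j, s⟩
  dsimp only
  cases b j <;> cases b' j <;> cases s <;> simp [← sub_eq_add_neg]

lemma cube_log_le {m : ℕ} (hm : 0 < m) {ε : ℝ} (h0 : 0 < ε) (h1 : ε ≤ 1 / 4)
    (b b' : Fin m → Bool) (x : Fin m × Bool) :
    |Real.log (cube m ε b x / cube m ε b' x)| ≤ 4 * ε := by
  have := log_odds h0 h1
  rw [cube_log_ratio hm, abs_le]
  split_ifs <;> constructor <;> linarith

lemma cube_kl {m : ℕ} (hm : 0 < m) {ε : ℝ} (h0 : 0 < ε) (h1 : ε ≤ 1 / 4)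
    (b b' : Fin m → Bool) :
    ε ^ 2 / m * ∑ j, (if b j = b' j then 0 else 1) ≤ kl (cube m ε b) (cube m ε b') := by
  have hm' : (0 : ℝ) < m := by exact_mod_cast hm
  unfold kl
  rw [Fintype.sum_prod_type, Finset.mul_sum]
  refine Finset.sum_le_sum fun j _ => ?_
  simp only [Fintype.sum_bool, cube_log_ratio hm]
  have hL := (log_odds h0 h1).1
  set L := Real.log ((1 + ε) / (1 - ε))
  unfold cube
  by_cases hb : b j = b' j
  · simp [hb]
  · have : ε ^ 2 / m ≤ ε * L / m := by gcongr; nlinarith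
    simp only [hb, if_false, mul_one]
    refine this.trans (le_of_eq ?_)
    cases b j <;> simp <;> field_simp <;> ring

lemma cube_bc {m : ℕ} (hm : 0 < m) {ε : ℝ} (h0 : 0 < ε) (h1 : ε ≤ 1 / 4)
    (b b' : Fin m → Bool) (j0 : Fin m) (hb : ∀ j, j ≠ j0 → b j = b' j) :
    1 - ε ^ 2 / m ≤ ∑ x, Real.sqrt (cube m ε b x * cube m ε b' x) := by
  have hm' : (0 : ℝ) < m := by exact_mod_cast hm
  have hj : ∀ j, (1 / m - if j = j0 then ε ^ 2 / m else 0) ≤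
      ∑ s, Real.sqrt (cube m ε b (j, s) * cube m ε b' (j, s)) := by
    intro j
    by_cases hbj : b j = b' j
    · have e : ∀ s, Real.sqrt (cube m ε b (j, s) * cube m ε b' (j, s)) = cube m ε b (j, s) := by
        intro s
        have : cube m ε b' (j, s) = cube m ε b (j, s) := by simp [cube, hbj]
        rw [this, Real.sqrt_mul_self (cube_pos hm h0 h1 b _).le]
      have e2 : ∑ s, cube m ε b (j, s) = 1 / m := by
        rw [Fintype.sum_bool]
        unfold cube
        cases b j <;> simp <;> field_simp <;> ring
      simp only [e, e2]
      have : 0 ≤ ε ^ 2 / m := by positivity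
      split_ifs <;> linarith
    · have hj0 : j = j0 := by
        by_contra hne
        exact hbj (hb j hne)
      have e : ∀ s, (1 - ε ^ 2) / (2 * m) ≤
          Real.sqrt (cube m ε b (j, s) * cube m ε b' (j, s)) := by
        intro s
        apply Real.le_sqrt_of_sq_le
        have : cube m ε b (j, s) * cube m ε b' (j, s) = (1 - ε ^ 2) / (2 * m) ^ 2 := by
          unfold cube
          revert hbj
          dsimp only
          cases b j <;> cases b' j <;> cases s <;> simp <;> field_simp <;> ring
        rw [this, div_pow]
        gcongr
        have hεle : ε ^ 2 ≤ 1 := by nlinarith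
        nlinarith [mul_nonneg (sq_nonneg ε) (sub_nonneg.mpr hεle)]
      rw [if_pos hj0, Fintype.sum_bool]
      refine le_trans (le_of_eq ?_) (add_le_add (e true) (e false))
      field_simp
      ring
  rw [Fintype.sum_prod_type]
  refine le_trans (le_of_eq ?_) (Finset.sum_le_sum fun j _ => hj j)
  rw [Finset.sum_sub_distrib]
  simp [hm'.ne']

/-- Theorem 4.2 (information-theoretic estimation lower bound under joint KL).
The finite sample space is `Fin d`, the base class consists of `K` full-support
distributions on it with pairwise log-ratios bounded by `G`, the decomposable class
consists of the induced product distributions on `(Fin d)^H`, and every proper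
selector suffers expected joint-KL risk at least `c·H·G²·log K / n` against some
`π* = θ*` in the class. -/
theorem kl_estimation_lower_bound :
    ∃ c c0 : ℝ, 0 < c ∧ 0 < c0 ∧
    ∀ (K : ℕ), 4 ≤ K → ∀ (n : ℕ), c0 * Real.log K ≤ n →
    ∀ (H : ℕ), 0 < H → ∀ (G : ℝ), 0 < G → G ≤ 1 →
    ∃ (d : ℕ) (P : Fin K → Fin d → ℝ), 0 < d ∧
      (∀ k, (∀ s, 0 < P k s) ∧ ∑ s, P k s = 1) ∧
      (∀ j k s, |Real.log (P j s / P k s)| ≤ G) ∧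
      (∀ sel : (Fin n → Fin H → Fin d) → (Fin H → Fin K),
        ∃ θstar : Fin H → Fin K,
          c * H * G ^ 2 * Real.log K / n ≤
            ∑ data : Fin n → Fin H → Fin d,
              (∏ i, ∏ h, P (θstar h) (data i h)) *
                kl (fun u : Fin H → Fin d => ∏ h, P (θstar h) (u h))
                   (fun u : Fin H → Fin d => ∏ h, P (sel data h) (u h))) := by
  refine ⟨1 / 256, 2, by norm_num, by norm_num, ?_⟩
  intro K hK n hn H hH G hG0 hG1
  have hlogK : 0 < Real.log K := Real.log_pos (by exact_mod_cast (by omega : 1 < K))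
  have hn0 : (0 : ℝ) < n := lt_of_lt_of_le (by positivity) hn
  obtain ⟨m, hm⟩ : ∃ m, m = Nat.log 2 K := ⟨_, rfl⟩
  have hmpos : 0 < m := hm ▸ Nat.log_pos (by norm_num) (by omega)
  have hm' : (0 : ℝ) < m := by exact_mod_cast hmpos
  have hm1 : (1 : ℝ) ≤ m := by exact_mod_cast hmpos
  have hle : 2 ^ m ≤ K := hm ▸ Nat.pow_log_le_self 2 (by omega)
  have hlt : K < 2 ^ (m + 1) := hm ▸ Nat.lt_pow_succ_log_self (by norm_num) K
  have hlog2 := Real.log_two_gt_d9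
  have hlog2' := Real.log_two_lt_d9
  have hmK : m * Real.log 2 ≤ Real.log K := by
    rw [← Real.log_pow]
    exact Real.log_le_log (by positivity) (by exact_mod_cast hle)
  have hKm : Real.log K ≤ (m + 1) * Real.log 2 := by
    have : Real.log K ≤ Real.log ((2 : ℝ) ^ (m + 1)) :=
      Real.log_le_log (by positivity) (by exact_mod_cast hlt.le)
    rw [Real.log_pow] at this
    exact_mod_cast this
  have hmn : (m : ℝ) ≤ n := by nlinarith
  have hK2 : Real.log K ≤ 2 * m := by nlinarith
  -- The perturbation is balanced so that `n` samples carry `n * ε ^ 2 / m = G ^ 2 / 16`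
  -- units of information per bit.
  obtain ⟨ε, hε⟩ : ∃ ε, ε = G / 4 * Real.sqrt (m / n) := ⟨_, rfl⟩
  have hε0 : 0 < ε := by rw [hε]; positivity
  have hεG : ε ≤ G / 4 := by
    rw [hε]
    refine mul_le_of_le_one_right (by positivity) (Real.sqrt_le_one.mpr ?_)
    exact (div_le_one hn0).mpr hmn
  have hε1 : ε ≤ 1 / 4 := by linarith
  have hεsq : ε ^ 2 = G ^ 2 / 16 * (m / n) := by
    rw [hε, mul_pow, Real.sq_sqrt (by positivity)]; ring
  -- Labels in `Fin K` outside the range of `e` repeat members of the hypercube family.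
  obtain ⟨e⟩ : Nonempty ((Fin m → Bool) ↪ Fin K) :=
    Function.Embedding.nonempty_of_card_le (by simpa using hle)
  let bits : Fin K → Fin m → Bool := Function.invFun e
  have hbits : ∀ b, bits (e b) = b := Function.leftInverse_invFun e.injective
  let E : Fin (m * 2) ≃ Fin m × Bool :=
    finProdFinEquiv.symm.trans ((Equiv.refl _).prodCongr finTwoEquiv)
  let Q : (Fin m → Bool) → Fin (m * 2) → ℝ := fun b s => cube m ε b (E s)
  have hQpos : ∀ b s, 0 < Q b s := fun b s => cube_pos hmpos hε0 hε1 b _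
  have hQsum : ∀ b, ∑ s, Q b s = 1 := fun b =>
    (Equiv.sum_comp E (cube m ε b)).trans (cube_sum hmpos ε b)
  refine ⟨m * 2, fun k => Q (bits k), by omega, fun k => ⟨hQpos _, hQsum _⟩, ?_, ?_⟩
  · intro j k s
    exact (cube_log_le hmpos hε0 hε1 _ _ _).trans (by linarith)
  · intro sel
    obtain ⟨v, hv⟩ := assouad (n := n) (H := H) Q hQpos hQsum (ε ^ 2 / m) (ε ^ 2 / m)
      (by positivity)
      (by rw [div_le_one hm']; nlinarith)
      (by
        rw [hεsq]
        have : (n : ℝ) * (G ^ 2 / 16 * (m / n) / m) = G ^ 2 / 16 := by field_simp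
        rw [this]
        nlinarith)
      (fun b b' j0 hb => (cube_bc hmpos hε0 hε1 b b' j0 hb).trans_eq
        (Equiv.sum_comp E (fun x => Real.sqrt (cube m ε b x * cube m ε b' x))).symm)
      (fun b b' => (cube_kl hmpos hε0 hε1 b b').trans_eq
        (Equiv.sum_comp E (fun x => cube m ε b x * Real.log (cube m ε b x / cube m ε b' x))).symm)
      (fun data h => bits (sel data h))
    refine ⟨fun h => e (v h), ?_⟩
    simp only [hbits]
    refine le_trans ?_ hv
    have h1 : ε ^ 2 / m * H * m / 8 = H * G ^ 2 * m / (128 * n) := by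
      rw [hεsq]; field_simp; norm_num
    have h2 : 1 / 256 * H * G ^ 2 * Real.log K / n = H * G ^ 2 * (Real.log K / 2) / (128 * n) := by
      field_simp; norm_num
    rw [h1, h2]
    gcongr
    linarith
end

section
/- Lemma D.1 (central condition to Bernstein condition). Let X be a real-valued random variable with |X| ≤ B almost surely, and let η > 0. If E[e^{−ηX}] ≤ 1, then E[X^2] ≤ 4·(1/η + B)·E[X]. -/
/-!
The claim integrates the pointwise bound `y² ≤ 4 (1 + b) (e^{-y} - 1 + y)` for `|y| ≤ b`
(`sq_le_mul_exp_neg_sub`), taken at `y = ηX` and `b = ηB`: the contribution of `e^{-ηX} - 1`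
has nonpositive expectation by the central condition, and dividing by `η²` leaves
`4 (1/η + B) E[X]`.
-/

open MeasureTheory

/-- For `y ≤ 2`, squaring `1 - y/2 ≤ e^{-y/2}` already gives `y²/4 ≤ e^{-y} - 1 + y`; for `y > 2`
the linear term `y - 1` alone dominates `y² / (4 (1 + y))`. -/
lemma sq_le_mul_exp_neg_sub {y b : ℝ} (h : |y| ≤ b) :
    y ^ 2 ≤ 4 * (1 + b) * (Real.exp (-y) - 1 + y) := by
  have hb : 0 ≤ b := (abs_nonneg y).trans h
  have hyb : y ≤ b := (le_abs_self y).trans h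
  rcases le_or_gt y 2 with hy | hy
  · have h1 : 1 - y / 2 ≤ Real.exp (-(y / 2)) := by
      linarith [Real.add_one_le_exp (-(y / 2))]
    have h2 : Real.exp (-y) = Real.exp (-(y / 2)) ^ 2 := by
      rw [← Real.exp_nat_mul]; congr 1; push_cast; ring
    have h3 : (1 - y / 2) ^ 2 ≤ Real.exp (-y) := by
      rw [h2]; exact pow_le_pow_left₀ (by linarith) h1 2
    have h4 : y ^ 2 / 4 ≤ Real.exp (-y) - 1 + y := by nlinarith
    have h5 : 0 ≤ b * (Real.exp (-y) - 1 + y) :=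
      mul_nonneg hb ((by positivity : 0 ≤ y ^ 2 / 4).trans h4)
    nlinarith
  · have h1 : y - 1 ≤ Real.exp (-y) - 1 + y := by linarith [Real.exp_pos (-y)]
    calc y ^ 2 ≤ 4 * (1 + y) * (y - 1) := by nlinarith
      _ ≤ 4 * (1 + b) * (Real.exp (-y) - 1 + y) :=
        mul_le_mul (by linarith) h1 (by linarith) (by linarith)

/-- Lemma D.1 (central condition to Bernstein condition): if `|X| ≤ B` a.s. and
`E[exp(−ηX)] ≤ 1`, then `E[X²] ≤ 4(1/η + B)·E[X]`. -/
theorem central_to_bernstein {Ω : Type*} [MeasurableSpace Ω]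
    (μ : Measure Ω) [IsProbabilityMeasure μ]
    (X : Ω → ℝ) (hX : Measurable X)
    (B : ℝ) (hB : 0 < B) (hbd : ∀ᵐ ω ∂μ, |X ω| ≤ B)
    (η : ℝ) (hη : 0 < η)
    (hcentral : ∫ ω, Real.exp (-η * X ω) ∂μ ≤ 1) :
    ∫ ω, (X ω) ^ 2 ∂μ ≤ 4 * (1 / η + B) * ∫ ω, X ω ∂μ := by
  have hXi : Integrable X μ := .of_bound hX.aestronglyMeasurable B (by simpa using hbd)
  have hEi : Integrable (fun ω => Real.exp (-η * X ω)) μ := by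
    refine .of_bound (by fun_prop) (Real.exp (η * B)) ?_
    filter_upwards [hbd] with ω hω
    rw [Real.norm_eq_abs, Real.abs_exp, Real.exp_le_exp]
    nlinarith [neg_le_of_abs_le hω]
  have hSi : Integrable (fun ω => X ω ^ 2) μ := by
    refine .of_bound (by fun_prop) (B ^ 2) ?_
    filter_upwards [hbd] with ω hω
    rw [norm_pow, Real.norm_eq_abs]
    exact pow_le_pow_left₀ (abs_nonneg _) hω 2
  have hGi : Integrable (fun ω => Real.exp (-η * X ω) - 1) μ := hEi.sub (integrable_const 1)
  have hpt : ∀ᵐ ω ∂μ, X ω ^ 2 ≤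
      4 * (1 / η + B) * ((Real.exp (-η * X ω) - 1) / η + X ω) := by
    filter_upwards [hbd] with ω hω
    have h := sq_le_mul_exp_neg_sub (y := η * X ω) (b := η * B) (by
      rw [abs_mul, abs_of_pos hη]; exact mul_le_mul_of_nonneg_left hω hη.le)
    rw [← neg_mul] at h
    refine le_of_mul_le_mul_left ?_ (pow_pos hη 2)
    calc η ^ 2 * X ω ^ 2 = (η * X ω) ^ 2 := by ring
      _ ≤ _ := h
      _ = _ := by field_simp
  have hint := integral_mono_ae hSi (((hGi.div_const η).add hXi).const_mul (4 * (1 / η + B))) hpt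
  have hval : ∫ ω, 4 * (1 / η + B) * ((Real.exp (-η * X ω) - 1) / η + X ω) ∂μ =
      4 * (1 / η + B) * ((∫ ω, Real.exp (-η * X ω) ∂μ - 1) / η + ∫ ω, X ω ∂μ) := by
    rw [integral_const_mul, integral_add (hGi.div_const η) hXi, integral_div,
      integral_sub hEi (integrable_const 1)]
    simp
  refine hint.trans (hval.le.trans ?_)
  refine mul_le_mul_of_nonneg_left ?_ (by positivity)
  linarith [div_nonpos_of_nonpos_of_nonneg (sub_nonpos.2 hcentral) hη.le]
end

section
/- Lemma D.3, forward direction (one-sided multiplicative Freedman bound). Let (F_t)_{t ≤ T} be a filtration and let (X_t)_{t ≤ T} be a sequence of random variables adapted to it with 0 ≤ X_t ≤ R almost surely for all t. Then for every ε ∈ (0,1) and δ ∈ (0,1), with probability at least 1 − δ: Σ_{t=1}^T X_t ≤ (1+ε) · Σ_{t=1}^T E[X_t | F_{t−1}] + (R/ε)·log(1/δ). -/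
/-!
The proof is the exponential supermartingale argument with parameter `ε / R`. On `0 ≤ x ≤ R`,
the inequality `exp y ≤ 1 + y + y²` for `|y| ≤ 1` gives
`exp ((ε / R) x) ≤ 1 + (ε / R) (1 + ε) x`, a bound that is linear in `x` and can therefore be
integrated conditionally. Together with `1 + y ≤ exp y` this shows that
`M_n = exp ((ε / R) ∑_{t ≤ n} (X_t - (1 + ε) E[X_t | ℱ_{t-1}]))` has nonincreasing expectation
(`freedman_step`), so `E[M_T] ≤ 1` (`freedman_exp_integral_le_one`). The failure event is contained
in `{M_T ≥ 1 / δ}`, and Markov's inequality bounds its probability by `δ`.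
-/

open MeasureTheory Finset

lemma exp_le_linear {R ε x : ℝ} (hR : 0 < R) (hε0 : 0 < ε) (hε1 : ε < 1)
    (hx0 : 0 ≤ x) (hxR : x ≤ R) :
    Real.exp (ε / R * x) ≤ 1 + ε / R * (1 + ε) * x := by
  have h0 : 0 ≤ ε / R * x := by positivity
  have h1 : ε / R * x ≤ ε := by
    rw [div_mul_eq_mul_div, div_le_iff₀ hR]
    exact mul_le_mul_of_nonneg_left hxR hε0.le
  have h2 := Real.abs_exp_sub_one_sub_id_le (x := ε / R * x) (by rw [abs_of_nonneg h0]; linarith)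
  have h3 := (abs_le.1 h2).2
  nlinarith [mul_le_mul_of_nonneg_left h1 h0]

/-- One step of the supermartingale: multiplying a bounded nonnegative `m`-measurable weight `G` by
`exp ((ε / R) (Y - (1 + ε) E[Y | m]))` does not increase its integral. -/
lemma freedman_step {Ω : Type*} {m m0 : MeasurableSpace Ω} (hm : m ≤ m0)
    (μ : Measure Ω) [IsProbabilityMeasure μ] {R ε C : ℝ} (hR : 0 < R) (hε0 : 0 < ε) (hε1 : ε < 1)
    {Y G : Ω → ℝ} (hY : StronglyMeasurable Y) (hbd : ∀ᵐ ω ∂μ, 0 ≤ Y ω ∧ Y ω ≤ R)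
    (hG : StronglyMeasurable[m] G) (hG0 : ∀ ω, 0 ≤ G ω) (hGC : ∀ᵐ ω ∂μ, G ω ≤ C) :
    ∫ ω, G ω * Real.exp (ε / R * (Y ω - (1 + ε) * (μ[Y | m]) ω)) ∂μ ≤ ∫ ω, G ω ∂μ := by
  have hYi : Integrable Y μ := by
    refine Integrable.of_bound hY.aestronglyMeasurable R ?_
    filter_upwards [hbd] with ω h
    rw [Real.norm_of_nonneg h.1]; exact h.2
  have hc0 : ∀ᵐ ω ∂μ, 0 ≤ (μ[Y | m]) ω :=
    condExp_nonneg (hbd.mono fun ω h => h.1)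
  set c := μ[Y | m] with hc
  have hcm : StronglyMeasurable[m] c := stronglyMeasurable_condExp
  set a := ε / R * (1 + ε) with ha
  have ha0 : 0 ≤ a := by positivity
  -- The `m`-measurable part of the new weight, still nonnegative and bounded by `C`.
  set H : Ω → ℝ := fun ω => G ω * Real.exp (-(a * c ω)) with hH
  have hHm : StronglyMeasurable[m] H :=
    hG.mul (Real.continuous_exp.comp_stronglyMeasurable (hcm.const_mul a).neg)
  have hH0 : ∀ ω, 0 ≤ H ω := fun ω => mul_nonneg (hG0 ω) (Real.exp_pos _).le
  have hHC : ∀ᵐ ω ∂μ, ‖H ω‖ ≤ C := by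
    filter_upwards [hGC, hc0] with ω h1 h2
    rw [Real.norm_of_nonneg (hH0 ω)]
    refine le_trans (mul_le_of_le_one_right (hG0 ω) ?_) h1
    rw [Real.exp_le_one_iff]
    nlinarith [mul_nonneg ha0 h2]
  have hHs : AEStronglyMeasurable H μ := (hHm.mono hm).aestronglyMeasurable
  have hHi : Integrable H μ := Integrable.of_bound hHs C hHC
  have hGi : Integrable G μ := by
    refine Integrable.of_bound (hG.mono hm).aestronglyMeasurable C ?_
    filter_upwards [hGC] with ω h
    rw [Real.norm_of_nonneg (hG0 ω)]; exact h
  have hHY : Integrable (fun ω => H ω * Y ω) μ := hYi.bdd_mul hHs hHC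
  have hHc : Integrable (fun ω => H ω * c ω) μ := integrable_condExp.bdd_mul hHs hHC
  have hpull : ∫ ω, H ω * Y ω ∂μ = ∫ ω, H ω * c ω ∂μ := by
    have h1 := integral_congr_ae (condExp_mul_of_stronglyMeasurable_left hHm hHY hYi)
    rw [integral_condExp hm] at h1
    exact h1
  calc ∫ ω, G ω * Real.exp (ε / R * (Y ω - (1 + ε) * c ω)) ∂μ
      ≤ ∫ ω, (H ω + a * (H ω * Y ω)) ∂μ := by
        refine integral_mono_of_nonneg
          (Filter.Eventually.of_forall fun ω => mul_nonneg (hG0 ω) (Real.exp_pos _).le)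
          (hHi.add (hHY.const_mul a)) ?_
        filter_upwards [hbd] with ω h
        have h1 := exp_le_linear hR hε0 hε1 h.1 h.2
        have h2 : Real.exp (ε / R * (Y ω - (1 + ε) * c ω))
            = Real.exp (-(a * c ω)) * Real.exp (ε / R * Y ω) := by
          rw [← Real.exp_add]; congr 1; rw [ha]; ring
        have h3 := mul_le_mul_of_nonneg_left h1 (hH0 ω)
        simp only [h2]
        simp only [hH] at h3 ⊢
        rw [← mul_assoc]
        refine h3.trans (le_of_eq ?_)
        rw [ha]; ring
    _ = ∫ ω, (H ω + a * (H ω * c ω)) ∂μ := by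
        rw [integral_add hHi (hHY.const_mul a), integral_add hHi (hHc.const_mul a),
          integral_const_mul, integral_const_mul, hpull]
    _ ≤ ∫ ω, G ω ∂μ := by
        refine integral_mono (hHi.add (hHc.const_mul a)) hGi fun ω => ?_
        have h1 := mul_le_mul_of_nonneg_left (Real.add_one_le_exp (a * c ω)) (hH0 ω)
        have h2 : H ω * Real.exp (a * c ω) = G ω := by
          simp only [hH]
          rw [mul_assoc, ← Real.exp_add]; simp
        rw [h2] at h1
        refine le_trans (le_of_eq ?_) h1
        ring

/-- The exponential of the compensated sum is integrable with expectation at most `1`. -/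
lemma freedman_exp_integral_le_one {Ω : Type*} {m0 : MeasurableSpace Ω}
    (μ : Measure Ω) [IsProbabilityMeasure μ] (ℱ : Filtration ℕ m0)
    (X : ℕ → Ω → ℝ) (hadapt : Adapted ℱ X) (R : ℝ) (hR : 0 < R)
    (hbd : ∀ t, ∀ᵐ ω ∂μ, 0 ≤ X t ω ∧ X t ω ≤ R)
    (ε : ℝ) (hε0 : 0 < ε) (hε1 : ε < 1) (n : ℕ) :
    let M : Ω → ℝ := fun ω => Real.exp (ε / R *
      ∑ t ∈ Finset.Icc 1 n, (X t ω - (1 + ε) * (μ[X t | ℱ (t - 1)]) ω))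
    Integrable M μ ∧ ∫ ω, M ω ∂μ ≤ 1 := by
  have hmeas : ∀ n, StronglyMeasurable[ℱ n] (fun ω => Real.exp (ε / R *
      ∑ t ∈ Finset.Icc 1 n, (X t ω - (1 + ε) * (μ[X t | ℱ (t - 1)]) ω))) := by
    intro n
    refine Real.continuous_exp.comp_stronglyMeasurable (StronglyMeasurable.const_mul ?_ _)
    refine Finset.stronglyMeasurable_fun_sum _ fun t ht => ?_
    have ht' := (Finset.mem_Icc.1 ht).2
    refine StronglyMeasurable.sub ((hadapt t).stronglyMeasurable.mono (ℱ.mono ht')) ?_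
    exact (stronglyMeasurable_condExp.mono (ℱ.mono (by omega))).const_mul _
  have hbound : ∀ n, ∀ᵐ ω ∂μ, Real.exp (ε / R *
      ∑ t ∈ Finset.Icc 1 n, (X t ω - (1 + ε) * (μ[X t | ℱ (t - 1)]) ω))
        ≤ Real.exp (ε / R * ∑ t ∈ Finset.Icc 1 n, R) := by
    intro n
    have hc : ∀ᵐ ω ∂μ, ∀ t, 0 ≤ (μ[X t | ℱ (t - 1)]) ω :=
      ae_all_iff.2 fun t => condExp_nonneg ((hbd t).mono fun ω h => h.1)
    filter_upwards [ae_all_iff.2 hbd, hc] with ω h1 h2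
    gcongr with t ht
    have h3 : 0 ≤ (1 + ε) * (μ[X t | ℱ (t - 1)]) ω := mul_nonneg (by linarith) (h2 t)
    linarith [(h1 t).2]
  refine ⟨?_, ?_⟩
  · refine Integrable.of_bound ((hmeas n).mono (ℱ.le n)).aestronglyMeasurable
      (Real.exp (ε / R * ∑ t ∈ Finset.Icc 1 n, R))
      ((hbound n).mono fun ω h => ?_)
    rw [Real.norm_of_nonneg (Real.exp_pos _).le]; exact h
  · induction n with
    | zero => simp
    | succ n ih =>
      refine le_trans ?_ ih
      have h := freedman_step (ℱ.le n) μ hR hε0 hε1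
        ((hadapt (n + 1)).stronglyMeasurable.mono (ℱ.le _)) (hbd (n + 1)) (hmeas n)
        (fun ω => (Real.exp_pos _).le) (hbound n)
      refine le_trans (le_of_eq (integral_congr_ae (Filter.Eventually.of_forall fun ω => ?_))) h
      simp only
      rw [Finset.sum_Icc_succ_top (by omega), mul_add, Real.exp_add, Nat.add_sub_cancel]

/-- Lemma D.3, forward direction (one-sided multiplicative Freedman bound):
for an adapted sequence with `0 ≤ X_t ≤ R` a.s., with probability at least `1 − δ`,
`Σ_{t=1}^T X_t ≤ (1+ε)·Σ_{t=1}^T E[X_t | F_{t−1}] + (R/ε)·log(1/δ)`. -/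
theorem freedman_one_sided_forward {Ω : Type*} {m0 : MeasurableSpace Ω}
    (μ : Measure Ω) [IsProbabilityMeasure μ]
    (ℱ : Filtration ℕ m0) (T : ℕ)
    (X : ℕ → Ω → ℝ) (hadapt : Adapted ℱ X)
    (R : ℝ) (hR : 0 < R)
    (hbd : ∀ t, ∀ᵐ ω ∂μ, 0 ≤ X t ω ∧ X t ω ≤ R)
    (ε : ℝ) (hε0 : 0 < ε) (hε1 : ε < 1)
    (δ : ℝ) (hδ0 : 0 < δ) (hδ1 : δ < 1) :
    ENNReal.ofReal (1 - δ) ≤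
      μ {ω | ∑ t ∈ Finset.Icc 1 T, X t ω ≤
        (1 + ε) * ∑ t ∈ Finset.Icc 1 T, (μ[X t | ℱ (t - 1)]) ω
          + (R / ε) * Real.log (1 / δ)} := by
  obtain ⟨hMi, hM1⟩ := freedman_exp_integral_le_one μ ℱ X hadapt R hR hbd ε hε0 hε1 T
  set M : Ω → ℝ := fun ω => Real.exp (ε / R *
      ∑ t ∈ Finset.Icc 1 T, (X t ω - (1 + ε) * (μ[X t | ℱ (t - 1)]) ω)) with hM
  set A := {ω | ∑ t ∈ Finset.Icc 1 T, X t ω ≤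
        (1 + ε) * ∑ t ∈ Finset.Icc 1 T, (μ[X t | ℱ (t - 1)]) ω
          + (R / ε) * Real.log (1 / δ)} with hA
  have hmarkov : μ.real {ω | 1 / δ ≤ M ω} ≤ δ := by
    have h := mul_meas_ge_le_integral_of_nonneg
      (Filter.Eventually.of_forall fun ω => (Real.exp_pos _).le) hMi (1 / δ)
    have h2 := h.trans hM1
    rwa [one_div, inv_mul_le_iff₀ hδ0, mul_one, ← one_div] at h2
  have hsub : Aᶜ ⊆ {ω | 1 / δ ≤ M ω} := by
    intro ω hω
    simp only [hA, Set.mem_compl_iff, Set.mem_ofPred_eq, not_le] at hω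
    simp only [Set.mem_ofPred_eq, hM]
    rw [← Real.log_le_iff_le_exp (by positivity), Finset.sum_sub_distrib, ← Finset.mul_sum,
      div_mul_eq_mul_div, le_div_iff₀ hR]
    have h1 : R / ε * Real.log (1 / δ) * ε = Real.log (1 / δ) * R := by
      field_simp
    rw [← h1, mul_comm ε]
    exact mul_le_mul_of_nonneg_right (by linarith) hε0.le
  have hcompl : μ Aᶜ ≤ ENNReal.ofReal δ := by
    rw [← ofReal_measureReal]
    exact ENNReal.ofReal_le_ofReal ((measureReal_mono hsub).trans hmarkov)
  rw [ENNReal.ofReal_sub _ hδ0.le, ENNReal.ofReal_one, tsub_le_iff_right]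
  calc (1 : ENNReal) = μ (A ∪ Aᶜ) := by rw [Set.union_compl_self, measure_univ]
    _ ≤ μ A + μ Aᶜ := measure_union_le _ _
    _ ≤ μ A + ENNReal.ofReal δ := by gcongr
end

section
/- Lemma D.3, reverse direction (one-sided multiplicative Freedman bound). Let (F_t)_{t ≤ T} be a filtration and let (X_t)_{t ≤ T} be a sequence of random variables adapted to it with 0 ≤ X_t ≤ R almost surely for all t. Then for every ε > 0 and δ ∈ (0,1), with probability at least 1 − δ: Σ_{t=1}^T E[X_t | F_{t−1}] ≤ (1+ε) · Σ_{t=1}^T X_t + ((1+ε)^2·R/ε)·log(1/δ). -/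
open MeasureTheory Finset

/-!
The proof is an exponential-supermartingale argument. Put `c = ε / ((1 + ε) R)` and `l = ε / R`,
so that `l = (1 + ε) c`. Convexity of the exponential gives `exp (-l x) ≤ 1 - c x` on `[0, R]`
(`exp_chord`). Writing `m_t = E[X_t | F_{t-1}]`, it follows that
`E[exp (-l X_t) | F_{t-1}] ≤ 1 - c m_t ≤ exp (-c m_t)`, hence `exp (∑ (c m_t - l X_t))` has
expectation at most `1` (`integral_exp_step` is the one-step estimate). Markov's inequality at level
`1 / δ` gives `∑ m_t ≤ (1 + ε) ∑ X_t + ((1 + ε) R / ε) log (1 / δ)` with probability at least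
`1 - δ`, which is slightly stronger than the claim.
-/

/-- The chord bound `exp (-(ε / R) x) ≤ 1 - (1 - exp (-ε)) x / R`, weakened through
`1 - exp (-ε) ≥ ε / (1 + ε)`. -/
lemma exp_chord {R ε x : ℝ} (hR : 0 < R) (hε : 0 < ε) (hx0 : 0 ≤ x) (hxR : x ≤ R) :
    Real.exp (-(ε / R * x)) ≤ 1 - ε / ((1 + ε) * R) * x := by
  have hconv := convexOn_exp.2 (Set.mem_univ (0 : ℝ)) (Set.mem_univ (-ε))
    (show 0 ≤ 1 - x / R by rw [sub_nonneg, div_le_one hR]; exact hxR)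
    (show 0 ≤ x / R by positivity) (by ring)
  simp only [smul_eq_mul, mul_zero, zero_add, Real.exp_zero, mul_one] at hconv
  have h1 : Real.exp (-ε) ≤ 1 / (1 + ε) := by
    rw [Real.exp_neg, ← one_div]
    exact one_div_le_one_div_of_le (by positivity) (by linarith [Real.add_one_le_exp ε])
  have h2 : x / R * Real.exp (-ε) ≤ x / R * (1 / (1 + ε)) :=
    mul_le_mul_of_nonneg_left h1 (by positivity)
  have e1 : x / R * -ε = -(ε / R * x) := by ring
  rw [e1] at hconv
  have e2 : 1 - ε / ((1 + ε) * R) * x = 1 - x / R + x / R * (1 / (1 + ε)) := by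
    field_simp
    ring
  linarith

/-- One step of the supermartingale: a bounded nonnegative weight `M` known at time `t - 1` does
not gain expectation when multiplied by `exp (c E[Y | m] - l Y)`. -/
lemma integral_exp_step {Ω : Type*} {m m0 : MeasurableSpace Ω} (hm : m ≤ m0)
    (μ : Measure Ω) [IsProbabilityMeasure μ] {Y M : Ω → ℝ} (hY : Measurable Y)
    {R ε C : ℝ} (hR : 0 < R) (hε : 0 < ε) (hbd : ∀ᵐ ω ∂μ, 0 ≤ Y ω ∧ Y ω ≤ R)
    (hM : StronglyMeasurable[m] M) (hM0 : ∀ ω, 0 ≤ M ω) (hMC : ∀ᵐ ω ∂μ, M ω ≤ C) :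
    (∀ᵐ ω ∂μ, M ω * Real.exp (ε / ((1 + ε) * R) * (μ[Y | m]) ω - ε / R * Y ω) ≤
      C * Real.exp (ε / ((1 + ε) * R) * R)) ∧
    ∫ ω, M ω * Real.exp (ε / ((1 + ε) * R) * (μ[Y | m]) ω - ε / R * Y ω) ∂μ ≤ ∫ ω, M ω ∂μ := by
  set c := ε / ((1 + ε) * R) with hc
  have hc0 : 0 ≤ c := by positivity
  have hYi : Integrable Y μ := Integrable.of_bound hY.aestronglyMeasurable R (by
    filter_upwards [hbd] with ω h
    rw [Real.norm_eq_abs, abs_of_nonneg h.1]; exact h.2)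
  have hmR : ∀ᵐ ω ∂μ, (μ[Y | m]) ω ≤ R := by
    have := condExp_mono (m := m) hYi (integrable_const R) (hbd.mono fun ω h => h.2)
    rwa [condExp_const hm] at this
  set A : Ω → ℝ := fun ω => M ω * Real.exp (c * (μ[Y | m]) ω) with hA
  have hAm : StronglyMeasurable[m] A :=
    hM.mul (Real.continuous_exp.comp_stronglyMeasurable
      (stronglyMeasurable_condExp.const_mul c))
  have hA0 : ∀ ω, 0 ≤ A ω := fun ω => mul_nonneg (hM0 ω) (Real.exp_pos _).le
  have hAC : ∀ᵐ ω ∂μ, A ω ≤ C * Real.exp (c * R) := by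
    filter_upwards [hMC, hmR] with ω h1 h2
    exact mul_le_mul h1 (Real.exp_le_exp.2 (mul_le_mul_of_nonneg_left h2 hc0))
      (Real.exp_pos _).le ((hM0 ω).trans h1)
  have hsplit : ∀ ω, M ω * Real.exp (c * (μ[Y | m]) ω - ε / R * Y ω) =
      A ω * Real.exp (-(ε / R * Y ω)) := fun ω => by
    rw [hA, mul_assoc, ← Real.exp_add, sub_eq_add_neg]
  simp only [hsplit]
  have hle : ∀ᵐ ω ∂μ, A ω * Real.exp (-(ε / R * Y ω)) ≤ A ω := by
    filter_upwards [hbd] with ω h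
    refine mul_le_of_le_one_right (hA0 ω) (Real.exp_le_one_iff.2 ?_)
    have := h.1
    have : 0 ≤ ε / R * Y ω := by positivity
    linarith
  refine ⟨by filter_upwards [hle, hAC] with ω h1 h2 using h1.trans h2, ?_⟩
  have hAn : ∀ᵐ ω ∂μ, ‖A ω‖ ≤ C * Real.exp (c * R) := by
    filter_upwards [hAC] with ω h
    rwa [Real.norm_eq_abs, abs_of_nonneg (hA0 ω)]
  have hAs : AEStronglyMeasurable A μ := (hAm.mono hm).aestronglyMeasurable
  have hAi : Integrable A μ := Integrable.of_bound hAs _ hAn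
  have hMi : Integrable M μ := Integrable.of_bound (hM.mono hm).aestronglyMeasurable C (by
    filter_upwards [hMC] with ω h
    rwa [Real.norm_eq_abs, abs_of_nonneg (hM0 ω)])
  have hAY : Integrable (fun ω => A ω * Y ω) μ := hYi.bdd_mul hAs hAn
  have hAE : Integrable (fun ω => A ω * (μ[Y | m]) ω) μ := integrable_condExp.bdd_mul hAs hAn
  -- `A` is `m`-measurable, so `Y` may be replaced by its conditional expectation.
  have hpull : ∫ ω, A ω * Y ω ∂μ = ∫ ω, A ω * (μ[Y | m]) ω ∂μ := by
    have h := condExp_mul_of_stronglyMeasurable_left hAm (g := Y) hAY hYi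
    rw [← integral_condExp hm (f := fun ω => A ω * Y ω)]
    exact integral_congr_ae h
  have hLi : Integrable (fun ω => A ω * Real.exp (-(ε / R * Y ω))) μ := by
    refine hAi.mono' (hAs.mul (by fun_prop)) ?_
    filter_upwards [hle] with ω h
    rwa [Real.norm_eq_abs, abs_of_nonneg (mul_nonneg (hA0 ω) (Real.exp_pos _).le)]
  calc ∫ ω, A ω * Real.exp (-(ε / R * Y ω)) ∂μ
      ≤ ∫ ω, (A ω - c * (A ω * Y ω)) ∂μ := by
        refine integral_mono_ae hLi (hAi.sub (hAY.const_mul c)) ?_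
        filter_upwards [hbd] with ω h
        have := mul_le_mul_of_nonneg_left (exp_chord hR hε h.1 h.2) (hA0 ω)
        rw [← hc] at this
        linarith
    _ = ∫ ω, (A ω - c * (A ω * (μ[Y | m]) ω)) ∂μ := by
        rw [integral_sub hAi (hAY.const_mul c), integral_sub hAi (hAE.const_mul c),
          integral_const_mul, integral_const_mul, hpull]
    _ ≤ ∫ ω, M ω ∂μ := by
        refine integral_mono (hAi.sub (hAE.const_mul c)) hMi fun ω => ?_
        have h1 := Real.add_one_le_exp (-(c * (μ[Y | m]) ω))
        have h2 := mul_le_mul_of_nonneg_left h1 (hA0 ω)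
        have h3 : A ω * Real.exp (-(c * (μ[Y | m]) ω)) = M ω := by
          rw [hA, mul_assoc, ← Real.exp_add, add_neg_cancel, Real.exp_zero, mul_one]
        rw [h3] at h2
        linarith

/-- Lemma D.3, reverse direction (one-sided multiplicative Freedman bound):
for an adapted sequence with `0 ≤ X_t ≤ R` a.s., with probability at least `1 − δ`,
`Σ_{t=1}^T E[X_t | F_{t−1}] ≤ (1+ε)·Σ_{t=1}^T X_t + ((1+ε)²R/ε)·log(1/δ)`. -/
theorem freedman_one_sided_reverse {Ω : Type*} {m0 : MeasurableSpace Ω}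
    (μ : Measure Ω) [IsProbabilityMeasure μ]
    (ℱ : Filtration ℕ m0) (T : ℕ)
    (X : ℕ → Ω → ℝ) (hadapt : Adapted ℱ X)
    (R : ℝ) (hR : 0 < R)
    (hbd : ∀ t, ∀ᵐ ω ∂μ, 0 ≤ X t ω ∧ X t ω ≤ R)
    (ε : ℝ) (hε0 : 0 < ε)
    (δ : ℝ) (hδ0 : 0 < δ) (hδ1 : δ < 1) :
    ENNReal.ofReal (1 - δ) ≤
      μ {ω | ∑ t ∈ Finset.Icc 1 T, (μ[X t | ℱ (t - 1)]) ω ≤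
        (1 + ε) * ∑ t ∈ Finset.Icc 1 T, X t ω
          + ((1 + ε) ^ 2 * R / ε) * Real.log (1 / δ)} := by
  set c := ε / ((1 + ε) * R) with hc
  have hc0 : 0 < c := by positivity
  let S : ℕ → Ω → ℝ := fun n ω =>
    ∑ t ∈ Finset.Icc 1 n, (c * (μ[X t | ℱ (t - 1)]) ω - ε / R * X t ω)
  have hSm : ∀ n, StronglyMeasurable[ℱ n] (S n) := fun n => by
    refine Finset.stronglyMeasurable_fun_sum _ fun t ht => ?_
    have htn := (Finset.mem_Icc.1 ht).2
    exact ((stronglyMeasurable_condExp.mono (ℱ.mono (by omega))).const_mul c).sub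
      (((hadapt t).stronglyMeasurable.mono (ℱ.mono htn)).const_mul _)
  have hEm : ∀ n, StronglyMeasurable[ℱ n] (fun ω => Real.exp (S n ω)) := fun n =>
    Real.continuous_exp.comp_stronglyMeasurable (hSm n)
  have key : ∀ n, (∃ C, ∀ᵐ ω ∂μ, Real.exp (S n ω) ≤ C) ∧ ∫ ω, Real.exp (S n ω) ∂μ ≤ 1 := by
    intro n
    induction n with
    | zero => exact ⟨⟨1, by simp [S]⟩, by simp [S]⟩
    | succ n ih =>
      obtain ⟨⟨C, hC⟩, hI⟩ := ih
      have hstep := integral_exp_step (ℱ.le n) μ (((hadapt (n + 1)).mono (ℱ.le _) le_rfl))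
        hR hε0 (hbd (n + 1)) (hEm n) (fun ω => (Real.exp_pos _).le) hC
      have hS : ∀ ω, Real.exp (S (n + 1) ω) = Real.exp (S n ω) *
          Real.exp (c * (μ[X (n + 1) | ℱ n]) ω - ε / R * X (n + 1) ω) := fun ω => by
        rw [← Real.exp_add]
        simp only [S]
        rw [Finset.sum_Icc_succ_top (by omega), Nat.add_sub_cancel]
      simp only [hS]
      exact ⟨⟨_, hstep.1⟩, hstep.2.trans hI⟩
  obtain ⟨⟨C, hC⟩, hI⟩ := key T
  have hEi : Integrable (fun ω => Real.exp (S T ω)) μ :=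
    Integrable.of_bound ((hEm T).mono (ℱ.le T)).aestronglyMeasurable C (by
      filter_upwards [hC] with ω h
      rwa [Real.norm_eq_abs, abs_of_nonneg (Real.exp_pos _).le])
  set B : Set Ω := {ω | 1 / δ ≤ Real.exp (S T ω)} with hB
  have hBm : MeasurableSet B :=
    measurableSet_le measurable_const ((hEm T).mono (ℱ.le T)).measurable
  have hmarkov : μ.real B ≤ δ := by
    have h := mul_meas_ge_le_integral_of_nonneg (μ := μ)
      (Filter.Eventually.of_forall fun ω => (Real.exp_pos (S T ω)).le) hEi (1 / δ)
    have h2 : 1 / δ * μ.real B ≤ 1 := h.trans hI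
    rwa [one_div, inv_mul_le_iff₀ hδ0, mul_one] at h2
  have hcompl : ENNReal.ofReal (1 - δ) ≤ μ Bᶜ := by
    rw [← ofReal_measureReal, probReal_compl_eq_one_sub hBm]
    exact ENNReal.ofReal_le_ofReal (by linarith)
  refine hcompl.trans (measure_mono fun ω hω => ?_)
  have hlog : 0 < Real.log (1 / δ) := Real.log_pos (by rw [lt_div_iff₀ hδ0]; linarith)
  have h1 : S T ω < Real.log (1 / δ) := by
    rw [Real.lt_log_iff_exp_lt (by positivity)]
    exact not_le.1 hω
  have h2 : S T ω = c * (∑ t ∈ Finset.Icc 1 T, (μ[X t | ℱ (t - 1)]) ω -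
      (1 + ε) * ∑ t ∈ Finset.Icc 1 T, X t ω) := by
    have hl : ε / R = c * (1 + ε) := by rw [hc]; field_simp
    simp only [S]
    rw [Finset.sum_sub_distrib, ← Finset.mul_sum, ← Finset.mul_sum, hl]
    ring
  have h3 : c * ((1 + ε) ^ 2 * R / ε) = 1 + ε := by rw [hc]; field_simp
  have h4 : c * (∑ t ∈ Finset.Icc 1 T, (μ[X t | ℱ (t - 1)]) ω -
      (1 + ε) * ∑ t ∈ Finset.Icc 1 T, X t ω) ≤
      c * (((1 + ε) ^ 2 * R / ε) * Real.log (1 / δ)) := by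
    rw [← h2, ← mul_assoc, h3]
    nlinarith
  have h5 := le_of_mul_le_mul_left h4 hc0
  rw [Set.mem_ofPred_eq]
  linarith
end
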